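/- arXiv:2304.11737 — 11 statements merged into one kernel-verified Lean document; each statement's English description precedes it below -/
import Mathlib

section
/- Let d ≥ 1 be a real number, c ≥ 0, K ≥ 1 an integer, and set k₀ = ⌈K/2⌉. Define step sizes η_k for 0 ≤ k < K by: if K ≤ d then η_k = 1/d for all k; if K > d then η_k = 1/d for k < k₀ and η_k = 2/(2d + k − k₀) for k₀ ≤ k < K. There is an absolute constant C > 0 (independent of d, c, K and the sequence) such that every sequence of nonnegative reals r₀, r₁, …, r_K satisfying r_{k+1} ≤ (1 − η_k)·r_k + c·η_k² for all 0 ≤ k < K obeys r_K ≤ C·( d·r₀·exp(−K/(2d)) + c/K ). -/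
theorem stich_phase_one (d c : ℝ) (hc : 0 ≤ c) (m : ℕ) (r : ℕ → ℝ) (hd : 1 ≤ d)
    (hr : ∀ k, 0 ≤ r k)
    (h : ∀ k < m, r (k + 1) ≤ (1 - 1 / d) * r k + c * (1 / d) ^ 2) :
    ∀ k ≤ m, r k ≤ Real.exp (-(k : ℝ) / d) * r 0 + c / d := by
  intro k
  induction k with
  | zero =>
    intro _
    have hd0 : 0 < d := by linarith
    have : 0 ≤ c / d := by positivity
    simpa using this
  | succ k ih =>
    intro hk
    have h1 := h k (by omega)
    have h2 := ih (by omega)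
    have hd0 : 0 < d := by linarith
    have hn : 0 ≤ 1 - 1 / d := by
      rw [sub_nonneg, div_le_one hd0]; exact hd
    have he : 1 - 1 / d ≤ Real.exp (-(1 / d)) := Real.one_sub_le_exp_neg _
    have h3 := mul_le_mul_of_nonneg_left h2 hn
    have h4 : Real.exp (-((k + 1 : ℕ) : ℝ) / d) = Real.exp (-(1 / d)) * Real.exp (-(k : ℝ) / d) := by
      rw [← Real.exp_add]; congr 1; push_cast; ring
    have h5 : (1 - 1 / d) * (Real.exp (-(k : ℝ) / d) * r 0)
        ≤ Real.exp (-(1 / d)) * (Real.exp (-(k : ℝ) / d) * r 0) :=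
      mul_le_mul_of_nonneg_right he (mul_nonneg (Real.exp_pos _).le (hr 0))
    rw [h4]
    have h6 : (1 - 1 / d) * (c / d) + c * (1 / d) ^ 2 = c / d := by ring
    linarith

theorem stich_phase_two (d c : ℝ) (J : ℕ) (r : ℕ → ℝ) (hd : 1 ≤ d)
    (hr : ∀ k, 0 ≤ r k)
    (h : ∀ j < J, r (j + 1) ≤ (1 - 2 / (2 * d + j)) * r j + c * (2 / (2 * d + j)) ^ 2) :
    ∀ j ≤ J, (2 * d - 1 + j) ^ 2 * r j ≤ (2 * d - 1) ^ 2 * r 0 + 4 * c * j := by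
  intro j
  induction j with
  | zero => intro _; simp
  | succ j ih =>
    intro hj
    have h1 := h j (by omega)
    have h2 := ih (by omega)
    have hj0 : (0 : ℝ) ≤ j := Nat.cast_nonneg j
    have ha : 0 < 2 * d + j := by linarith
    have h3 := mul_le_mul_of_nonneg_left h1 (sq_nonneg (2 * d + (j : ℝ)))
    have h4 : (2 * d + (j : ℝ)) ^ 2 * ((1 - 2 / (2 * d + j)) * r j + c * (2 / (2 * d + j)) ^ 2)
        = ((2 * d - 1 + j) ^ 2 - 1) * r j + 4 * c := by
      field_simp; ring
    rw [h4] at h3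
    push_cast
    have h5 := hr j
    have h6 : 2 * d - 1 + ((j : ℝ) + 1) = 2 * d + j := by ring
    rw [h6]
    linarith

/-- Stich's step-size/recursion lemma (Lemma A.3 of the paper). -/
theorem stich_recursion_lemma :
    ∃ C : ℝ, 0 < C ∧
      ∀ (d c : ℝ) (K : ℕ) (η r : ℕ → ℝ),
        1 ≤ d → 0 ≤ c → 1 ≤ K →
        (∀ k < K, η k =
          if (K : ℝ) ≤ d then 1 / d
          else if k < ⌈(K : ℝ) / 2⌉₊ then 1 / d
          else 2 / (2 * d + (k : ℝ) - (⌈(K : ℝ) / 2⌉₊ : ℝ))) →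
        (∀ k, 0 ≤ r k) →
        (∀ k < K, r (k + 1) ≤ (1 - η k) * r k + c * η k ^ 2) →
        r K ≤ C * (d * r 0 * Real.exp (-(K : ℝ) / (2 * d)) + c / K) := by
  refine ⟨8, by norm_num, ?_⟩
  intro d c K η r hd hc hK hη hr h
  have hd0 : 0 < d := by linarith
  have hK0 : (0 : ℝ) < K := by exact_mod_cast hK
  have hK1 : (1 : ℝ) ≤ K := by exact_mod_cast hK
  have hcK : 0 ≤ c / K := by positivity
  have hE := Real.exp_pos (-(K : ℝ) / (2 * d))
  have hrE : 0 ≤ r 0 * Real.exp (-(K : ℝ) / (2 * d)) := mul_nonneg (hr 0) hE.le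
  have hdE : r 0 * Real.exp (-(K : ℝ) / (2 * d)) ≤ d * r 0 * Real.exp (-(K : ℝ) / (2 * d)) := by
    rw [mul_assoc]; exact le_mul_of_one_le_left hrE hd
  -- the contraction over at least half of the steps
  have hexp : ∀ x : ℝ, (K : ℝ) / 2 ≤ x →
      Real.exp (-x / d) * r 0 ≤ r 0 * Real.exp (-(K : ℝ) / (2 * d)) := by
    intro x hx
    rw [mul_comm]
    apply mul_le_mul_of_nonneg_left _ (hr 0)
    apply Real.exp_le_exp.mpr
    rw [← div_div]
    apply div_le_div_of_nonneg_right _ hd0.le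
    linarith
  by_cases hKd : (K : ℝ) ≤ d
  · have h1 := stich_phase_one d c hc K r hd hr (fun k hk => by
      have := h k hk
      rwa [hη k hk, if_pos hKd] at this) K le_rfl
    have h2 := hexp K (by linarith)
    have h3 : c / d ≤ c / K := div_le_div_of_nonneg_left hc hK0 hKd
    linarith
  · obtain ⟨k₀, hk₀⟩ : ∃ k₀, k₀ = ⌈(K : ℝ) / 2⌉₊ := ⟨_, rfl⟩
    rw [← hk₀] at hη
    have hlo : (K : ℝ) / 2 ≤ k₀ := by rw [hk₀]; exact Nat.le_ceil _
    have hle : k₀ ≤ K := by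
      rw [hk₀]; apply Nat.ceil_le.mpr; linarith
    have hhi : 2 * k₀ ≤ K + 1 := by
      have : (k₀ : ℝ) < K / 2 + 1 := by rw [hk₀]; exact Nat.ceil_lt_add_one (by positivity)
      have : (2 * k₀ : ℝ) < K + 2 := by linarith
      have : 2 * k₀ < K + 2 := by exact_mod_cast this
      omega
    have hhi' : (2 * k₀ : ℝ) ≤ K + 1 := by exact_mod_cast hhi
    obtain ⟨J, rfl⟩ := Nat.exists_eq_add_of_le hle
    have h1 := stich_phase_one d c hc k₀ r hd hr (fun k hk => by
      have := h k (by omega)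
      rwa [hη k (by omega), if_neg hKd, if_pos hk] at this) k₀ le_rfl
    have h2 := hexp k₀ hlo
    have h3 := stich_phase_two d c J (fun j => r (k₀ + j)) hd (fun j => hr _) (fun j hj => by
      have := h (k₀ + j) (by omega)
      rw [hη (k₀ + j) (by omega), if_neg hKd, if_neg (by omega)] at this
      have e : 2 * d + ((k₀ + j : ℕ) : ℝ) - k₀ = 2 * d + j := by push_cast; ring
      rw [e] at this
      exact this) J le_rfl
    simp only [add_zero] at h3
    generalize r 0 * Real.exp (-((k₀ + J : ℕ) : ℝ) / (2 * d)) = A at *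
    have hJ0 : (0 : ℝ) ≤ J := Nat.cast_nonneg J
    have hs : ((k₀ + J : ℕ) : ℝ) / 2 ≤ 2 * d - 1 + J := by
      push_cast at *; linarith
    have hsp : 0 < 2 * d - 1 + (J : ℝ) := by linarith
    have h4 : r k₀ ≤ A + c / d := h1.trans (by linarith)
    have h5 : (2 * d - 1) ^ 2 * (c / d) ≤ 4 * c * (2 * d - 1) := by
      have : (2 * d - 1) * (c / d) ≤ 2 * c := by
        rw [← mul_div_assoc, div_le_iff₀ hd0]; nlinarith
      nlinarith
    have h6 : (2 * d - 1) ^ 2 * A ≤ (2 * d - 1 + J) ^ 2 * A :=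
      mul_le_mul_of_nonneg_right (pow_le_pow_left₀ (by linarith) (by linarith) 2) hrE
    have h7 := mul_le_mul_of_nonneg_left h4 (sq_nonneg (2 * d - 1))
    have h8 : (2 * d - 1 + J) ^ 2 * r (k₀ + J) ≤
        (2 * d - 1 + J) ^ 2 * (A + 4 * c / (2 * d - 1 + J)) := by
      have e : (2 * d - 1 + J) ^ 2 * (A + 4 * c / (2 * d - 1 + J))
        = (2 * d - 1 + J) ^ 2 * A + 4 * c * (2 * d - 1 + J) := by field_simp
      rw [e]; linarith
    have h9 := le_of_mul_le_mul_left h8 (by positivity)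
    have h10 : 4 * c / (2 * d - 1 + J) ≤ 8 * (c / ((k₀ + J : ℕ) : ℝ)) := by
      have := div_le_div_of_nonneg_left (by positivity : 0 ≤ 4 * c) (by positivity) hs
      refine this.trans (le_of_eq ?_)
      field_simp; ring
    linarith
end

section
/- Let X ⊆ ℝ^d be convex, let f : ℝ^d → ℝ be differentiable, L-smooth on X with L > 0, and convex on X (i.e., f(z) ≥ f(y) + ⟨∇f(y), z − y⟩ for all y, z ∈ X). Let x, s, x* ∈ X, g ∈ ℝ^d, η ∈ [0,1], α > 0, and suppose s satisfies ⟨g, s⟩ ≤ ⟨g, z⟩ for all z ∈ X. Then, with x⁺ = x + η(s − x), one has f(x⁺) − f(x*) ≤ (1 − η)·(f(x) − f(x*)) + (α/L)·‖∇f(x) − g‖² + (L·η²/α)·‖s − x*‖² + (L·η²/2)·‖s − x‖². -/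
open scoped RealInnerProductSpace

/-- Per-iteration descent inequality of Frank–Wolfe with an inexact gradient
estimate `g` on a convex set `X`, for a convex `L`-smooth function `f`
(proof of Theorem 1 of the paper, before taking expectations). -/
theorem fw_descent_inequality_convex {d : ℕ}
    (X : Set (EuclideanSpace ℝ (Fin d))) (hX : Convex ℝ X)
    (f : EuclideanSpace ℝ (Fin d) → ℝ) (L : ℝ) (hL : 0 < L)
    (hdiff : Differentiable ℝ f)
    (hsmooth : ∀ x ∈ X, ∀ y ∈ X, ‖gradient f x - gradient f y‖ ≤ L * ‖x - y‖)
    (hconv : ∀ y ∈ X, ∀ z ∈ X, f y + ⟪gradient f y, z - y⟫ ≤ f z)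
    (x s xstar : EuclideanSpace ℝ (Fin d))
    (hx : x ∈ X) (hs : s ∈ X) (hxstar : xstar ∈ X)
    (g : EuclideanSpace ℝ (Fin d)) (η α : ℝ)
    (hη : η ∈ Set.Icc (0 : ℝ) 1) (hα : 0 < α)
    (hmin : ∀ z ∈ X, ⟪g, s⟫ ≤ ⟪g, z⟫) :
    f (x + η • (s - x)) - f xstar ≤
      (1 - η) * (f x - f xstar)
        + (α / L) * ‖gradient f x - g‖ ^ 2
        + (L * η ^ 2 / α) * ‖s - xstar‖ ^ 2
        + (L * η ^ 2 / 2) * ‖s - x‖ ^ 2 := by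
  obtain ⟨hη0, hη1⟩ := hη
  set v := s - x with hv
  have hmem : ∀ t ∈ Set.Icc (0 : ℝ) 1, x + t • v ∈ X := fun t ht =>
    hX.add_smul_sub_mem hx hs ht
  have hder : ∀ t : ℝ, HasDerivAt (fun t : ℝ => f (x + t • v)) ⟪gradient f (x + t • v), v⟫ t := by
    intro t
    have h1 : HasDerivAt (fun t : ℝ => x + t • v) v t := by
      simpa using ((hasDerivAt_id t).smul_const v).const_add x
    have h2 := ((hdiff (x + t • v)).hasGradientAt.hasFDerivAt).comp_hasDerivAt t h1
    exact h2.congr_deriv (by simp)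
  have hB : ∀ t : ℝ, HasDerivAt
      (fun t : ℝ => f x + t * ⟪gradient f x, v⟫ + (L * t ^ 2 / 2) * ‖v‖ ^ 2)
      (⟪gradient f x, v⟫ + L * t * ‖v‖ ^ 2) t := by
    intro t
    have h1 := ((hasDerivAt_id t).mul_const ⟪gradient f x, v⟫).const_add (f x)
    have h2 := ((((hasDerivAt_id t).pow 2).const_mul L).div_const 2).mul_const (‖v‖ ^ 2)
    refine (h1.add h2).congr_deriv ?_
    simp only [id, Nat.cast_ofNat]
    ring
  have hdesc : f (x + η • v) ≤
      f x + η * ⟪gradient f x, v⟫ + (L * η ^ 2 / 2) * ‖v‖ ^ 2 := by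
    refine image_le_of_deriv_right_le_deriv_boundary (a := 0) (b := 1)
      (f := fun t : ℝ => f (x + t • v))
      (B := fun t : ℝ => f x + t * ⟪gradient f x, v⟫ + (L * t ^ 2 / 2) * ‖v‖ ^ 2)
      (fun t _ => (hder t).continuousAt.continuousWithinAt)
      (fun t _ => (hder t).hasDerivWithinAt) (by simp)
      (fun t _ => (hB t).continuousAt.continuousWithinAt)
      (fun t _ => (hB t).hasDerivWithinAt) ?_ ⟨hη0, hη1⟩
    intro t ht
    have h1 := hsmooth _ (hmem t ⟨ht.1, ht.2.le⟩) x hx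
    have h2 := real_inner_le_norm (gradient f (x + t • v) - gradient f x) v
    rw [add_sub_cancel_left, norm_smul, Real.norm_of_nonneg ht.1] at h1
    rw [inner_sub_left] at h2
    have h3 := mul_le_mul_of_nonneg_right h1 (norm_nonneg v)
    nlinarith
  have hc := mul_le_mul_of_nonneg_left (hconv x hx xstar hxstar) hη0
  have hm := mul_le_mul_of_nonneg_left (hmin xstar hxstar) hη0
  have hcs := mul_le_mul_of_nonneg_left
    (real_inner_le_norm (gradient f x - g) (s - xstar)) hη0
  have hy : η * (‖gradient f x - g‖ * ‖s - xstar‖) ≤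
      (α / L) * ‖gradient f x - g‖ ^ 2 + (L * η ^ 2 / α) * ‖s - xstar‖ ^ 2 := by
    generalize ‖gradient f x - g‖ = a
    generalize ‖s - xstar‖ = b
    have e : (α / L) * a ^ 2 + (L * η ^ 2 / α) * b ^ 2 - η * (a * b) =
        ((α * a - L * η * b / 2) ^ 2 + 3 / 4 * (L * η * b) ^ 2) / (L * α) := by
      field_simp
      ring
    have : 0 ≤ ((α * a - L * η * b / 2) ^ 2 + 3 / 4 * (L * η * b) ^ 2) / (L * α) := by
      positivity
    linarith
  simp only [hv, inner_sub_left, inner_sub_right] at hdesc hc hm hcs ⊢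
  nlinarith
end

section
/- Let X ⊆ ℝ^d be convex, let f : ℝ^d → ℝ be differentiable and L-smooth on X with L > 0. Let x, s ∈ X, g ∈ ℝ^d, η ∈ [0,1], α > 0, and suppose s satisfies ⟨g, s⟩ ≤ ⟨g, z⟩ for all z ∈ X. Then, with x⁺ = x + η(s − x), for every z ∈ X one has η·⟨∇f(x), x − z⟩ ≤ f(x) − f(x⁺) + (α/L)·‖∇f(x) − g‖² + (L·η²/α)·‖s − z‖² + (L·η²/2)·‖s − x‖². -/
open scoped RealInnerProductSpace

/-- Per-iteration Frank–Wolfe-gap inequality with an inexact gradient estimate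
`g` on a convex set `X`, for an `L`-smooth (not necessarily convex) function `f`
(proof of Theorem 2 of the paper, before taking expectations). -/
theorem fw_gap_inequality_nonconvex {d : ℕ}
    (X : Set (EuclideanSpace ℝ (Fin d))) (hX : Convex ℝ X)
    (f : EuclideanSpace ℝ (Fin d) → ℝ) (L : ℝ) (hL : 0 < L)
    (hdiff : Differentiable ℝ f)
    (hsmooth : ∀ x ∈ X, ∀ y ∈ X, ‖gradient f x - gradient f y‖ ≤ L * ‖x - y‖)
    (x s : EuclideanSpace ℝ (Fin d)) (hx : x ∈ X) (hs : s ∈ X)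
    (g : EuclideanSpace ℝ (Fin d)) (η α : ℝ)
    (hη : η ∈ Set.Icc (0 : ℝ) 1) (hα : 0 < α)
    (hmin : ∀ z ∈ X, ⟪g, s⟫ ≤ ⟪g, z⟫) :
    ∀ z ∈ X,
      η * ⟪gradient f x, x - z⟫ ≤
        f x - f (x + η • (s - x))
          + (α / L) * ‖gradient f x - g‖ ^ 2
          + (L * η ^ 2 / α) * ‖s - z‖ ^ 2
          + (L * η ^ 2 / 2) * ‖s - x‖ ^ 2 := by
  intro z hz
  obtain ⟨hη0, hη1⟩ := hη
  have hmem : ∀ t ∈ Set.Icc (0 : ℝ) 1, x + t • (s - x) ∈ X := fun t ht =>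
    hX.add_smul_sub_mem hx hs ht
  have hderiv : ∀ t : ℝ, HasDerivAt (fun t : ℝ => f (x + t • (s - x)))
      ⟪gradient f (x + t • (s - x)), s - x⟫ t := by
    intro t
    have h1 : HasDerivAt (fun t : ℝ => x + t • (s - x)) (s - x) t := by
      simpa using ((hasDerivAt_id t).smul_const (s - x)).const_add x
    have h2 := (hdiff (x + t • (s - x))).hasGradientAt.hasFDerivAt
    have h3 := h2.comp_hasDerivAt t h1
    simpa [Function.comp_def] using h3
  have hB : ∀ t : ℝ, HasDerivAt
      (fun t : ℝ => f x + t * ⟪gradient f x, s - x⟫ + L * t ^ 2 / 2 * ‖s - x‖ ^ 2)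
      (⟪gradient f x, s - x⟫ + L * t * ‖s - x‖ ^ 2) t := by
    intro t
    have h1 := ((hasDerivAt_id t).mul_const ⟪gradient f x, s - x⟫).const_add (f x)
    have h2 := ((((hasDerivAt_id t).pow 2).const_mul L).div_const 2).mul_const (‖s - x‖ ^ 2)
    refine (h1.add h2).congr_deriv ?_
    simp only [id, Nat.cast_ofNat]
    ring
  have hdesc : f (x + η • (s - x)) ≤
      f x + η * ⟪gradient f x, s - x⟫ + L * η ^ 2 / 2 * ‖s - x‖ ^ 2 := by
    refine image_le_of_deriv_right_le_deriv_boundary (a := 0) (b := 1)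
      (f := fun t : ℝ => f (x + t • (s - x)))
      (B := fun t : ℝ => f x + t * ⟪gradient f x, s - x⟫ + L * t ^ 2 / 2 * ‖s - x‖ ^ 2)
      (fun t _ => (hderiv t).continuousAt.continuousWithinAt)
      (fun t _ => (hderiv t).hasDerivWithinAt) (by simp)
      (fun t _ => (hB t).continuousAt.continuousWithinAt)
      (fun t _ => (hB t).hasDerivWithinAt) ?_ ⟨hη0, hη1⟩
    intro t ht
    have h1 := hsmooth _ (hmem t ⟨ht.1, ht.2.le⟩) x hx
    rw [add_sub_cancel_left, norm_smul, Real.norm_of_nonneg ht.1] at h1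
    have h2 := real_inner_le_norm (gradient f (x + t • (s - x)) - gradient f x) (s - x)
    have h3 := mul_le_mul_of_nonneg_right h1 (norm_nonneg (s - x))
    rw [inner_sub_left] at h2
    nlinarith
  have hg := hmin z hz
  have hcs := real_inner_le_norm (gradient f x - g) (s - z)
  have hyoung : η * (‖gradient f x - g‖ * ‖s - z‖) ≤
      (α / L) * ‖gradient f x - g‖ ^ 2 + (L * η ^ 2 / α) * ‖s - z‖ ^ 2 := by
    have hc : 0 < α / L := div_pos hα hL
    have e : (α / L) * ‖gradient f x - g‖ ^ 2 + (L * η ^ 2 / α) * ‖s - z‖ ^ 2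
        - 2 * (η * (‖gradient f x - g‖ * ‖s - z‖))
        = (α / L) * (‖gradient f x - g‖ - L / α * η * ‖s - z‖) ^ 2 := by
      field_simp
      ring
    have h1 := mul_nonneg hc.le (sq_nonneg (‖gradient f x - g‖ - L / α * η * ‖s - z‖))
    have h2 : 0 ≤ η * (‖gradient f x - g‖ * ‖s - z‖) := by positivity
    linarith
  have h4 : η * ⟪gradient f x, s - z⟫ ≤ η * (‖gradient f x - g‖ * ‖s - z‖) := by
    apply mul_le_mul_of_nonneg_left _ hη0
    rw [inner_sub_left, inner_sub_right g] at hcs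
    linarith
  have h5 : η * ⟪gradient f x, x - z⟫ =
      η * ⟪gradient f x, s - z⟫ - η * ⟪gradient f x, s - x⟫ := by
    simp only [inner_sub_right]
    ring
  linarith
end

section
/- Let n ≥ 1 and for each i ∈ {1,…,n} let f_i : ℝ^d → ℝ be differentiable with ‖∇f_i(u) − ∇f_i(v)‖ ≤ L_i·‖u − v‖ for all u, v ∈ ℝ^d, where L_i ≥ 0. Set f = (1/n)·Σ_{i=1}^n f_i and L̃² = (1/n)·Σ_{i=1}^n L_i². Then for every x, y, g ∈ ℝ^d: (1/n)·Σ_{i=1}^n ‖ g + ∇f_i(y) − ∇f_i(x) − ∇f(y) ‖² ≤ ‖ g − ∇f(x) ‖² + L̃²·‖ y − x ‖². -/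
/-- Single-sample (`b = 1`) SARAH variance recursion: the expected squared error
of the estimator `g + ∇fᵢ(y) − ∇fᵢ(x)` (with `i` uniform) is at most
`‖g − ∇f(x)‖² + L̃²‖y − x‖²`. -/
theorem sarah_variance_recursion_single_sample {d n : ℕ} (hn : 1 ≤ n)
    (f : Fin n → EuclideanSpace ℝ (Fin d) → ℝ) (L : Fin n → ℝ)
    (hL : ∀ i, 0 ≤ L i)
    (hdiff : ∀ i, Differentiable ℝ (f i))
    (hlip : ∀ i, ∀ u v, ‖gradient (f i) u - gradient (f i) v‖ ≤ L i * ‖u - v‖)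
    (F : EuclideanSpace ℝ (Fin d) → ℝ)
    (hF : F = fun x => (1 / (n : ℝ)) * ∑ i, f i x)
    (Lt2 : ℝ) (hLt2 : Lt2 = (1 / (n : ℝ)) * ∑ i, (L i) ^ 2)
    (x y g : EuclideanSpace ℝ (Fin d)) :
    (1 / (n : ℝ)) * ∑ i, ‖g + gradient (f i) y - gradient (f i) x - gradient F y‖ ^ 2
      ≤ ‖g - gradient F x‖ ^ 2 + Lt2 * ‖y - x‖ ^ 2 := by
  have hn0 : (n : ℝ) ≠ 0 := by positivity
  have hgrad : ∀ z, gradient F z = (1 / (n : ℝ)) • ∑ i, gradient (f i) z := by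
    intro z
    have h : HasFDerivAt F ((1 / (n : ℝ)) • ∑ i, fderiv ℝ (f i) z) z := by
      rw [hF]
      exact (HasFDerivAt.fun_sum fun i _ => (hdiff i z).hasFDerivAt).const_mul (1 / (n : ℝ))
    unfold gradient
    rw [h.fderiv, map_smulₛₗ, map_sum]
    simp
  set a : Fin n → EuclideanSpace ℝ (Fin d) :=
    fun i => gradient (f i) y - gradient (f i) x with ha
  set m := gradient F y - gradient F x with hm
  set e := g - gradient F x with he
  have hmean : ∑ i, a i = (n : ℝ) • m := by
    rw [hm, hgrad, hgrad, ← smul_sub, smul_smul, mul_one_div_cancel hn0, one_smul,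
      ← Finset.sum_sub_distrib]
  have hterm : ∀ i, ‖g + gradient (f i) y - gradient (f i) x - gradient F y‖ ^ 2
      = ‖e - m‖ ^ 2 + 2 * inner ℝ (e - m) (a i) + ‖a i‖ ^ 2 := by
    intro i
    rw [← norm_add_sq_real]
    congr 2
    simp only [he, hm, ha]
    abel
  have hsum : ∑ i, ‖g + gradient (f i) y - gradient (f i) x - gradient F y‖ ^ 2
      = n * (‖e‖ ^ 2 - ‖m‖ ^ 2) + ∑ i, ‖a i‖ ^ 2 := by
    simp_rw [hterm]
    rw [Finset.sum_add_distrib, Finset.sum_add_distrib, ← Finset.mul_sum, ← inner_sum, hmean,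
      inner_smul_right, inner_sub_left, norm_sub_sq_real, real_inner_self_eq_norm_sq]
    simp
    ring
  have hbound : ∑ i, ‖a i‖ ^ 2 ≤ (∑ i, (L i) ^ 2) * ‖y - x‖ ^ 2 := by
    rw [Finset.sum_mul]
    refine Finset.sum_le_sum fun i _ => ?_
    rw [← mul_pow]
    exact pow_le_pow_left₀ (norm_nonneg _) (hlip i y x) 2
  have h2 := mul_le_mul_of_nonneg_left hbound (by positivity : 0 ≤ 1 / (n : ℝ))
  rw [hsum, hLt2, mul_add, ← mul_assoc, one_div_mul_cancel hn0]
  nlinarith [sq_nonneg ‖m‖]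
end

section
/- Let n ≥ 1, b ≥ 1, and for each i ∈ {1,…,n} let f_i : ℝ^d → ℝ be differentiable with ‖∇f_i(u) − ∇f_i(v)‖ ≤ L_i·‖u − v‖ for all u, v ∈ ℝ^d, where L_i ≥ 0. Set f = (1/n)·Σ_{i=1}^n f_i and L̃² = (1/n)·Σ_{i=1}^n L_i². Then for every x, y, g ∈ ℝ^d, averaging over all b-tuples σ ∈ {1,…,n}^b (i.i.d. uniform sampling with replacement): (1/n^b)·Σ_{σ ∈ {1,…,n}^b} ‖ g + (1/b)·Σ_{l=1}^b ( ∇f_{σ(l)}(y) − ∇f_{σ(l)}(x) ) − ∇f(y) ‖² ≤ ‖ g − ∇f(x) ‖² + (L̃²/b)·‖ y − x ‖². -/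
lemma sum_tuple_aux {E : Type*} [NormedAddCommGroup E] [InnerProductSpace ℝ E] {n : ℕ}
    (e : Fin n → E) (V : ℝ) (he : ∑ i, e i = 0) (hV : ∑ i, ‖e i‖ ^ 2 = n * V) (b : ℕ) :
    ∀ a : E, ∑ σ : Fin b → Fin n, ‖a + ∑ l, e (σ l)‖ ^ 2 = (n : ℝ) ^ b * (‖a‖ ^ 2 + b * V) := by
  induction b with
  | zero => intro a; simp
  | succ b ih =>
    intro a
    rw [← (Fin.consEquiv (fun _ : Fin (b + 1) => Fin n)).sum_comp, Fintype.sum_prod_type]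
    have h1 : ∀ i : Fin n, ∑ σ : Fin b → Fin n,
        ‖a + ∑ l, e ((Fin.consEquiv (fun _ : Fin (b + 1) => Fin n)) (i, σ) l)‖ ^ 2
        = (n : ℝ) ^ b * (‖a + e i‖ ^ 2 + b * V) := by
      intro i
      rw [← ih (a + e i)]
      refine Finset.sum_congr rfl fun σ _ => ?_
      simp [Fin.consEquiv, Fin.sum_univ_succ, add_assoc]
    rw [Finset.sum_congr rfl fun i _ => h1 i, ← Finset.mul_sum, Finset.sum_add_distrib]
    have h2 : ∑ i, ‖a + e i‖ ^ 2 = n * ‖a‖ ^ 2 + n * V := by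
      simp_rw [norm_add_sq_real]
      rw [Finset.sum_add_distrib, Finset.sum_add_distrib, ← Finset.mul_sum, ← inner_sum, he, hV]
      simp
    rw [h2]
    simp
    ring

lemma gradient_avg_aux {d n : ℕ} (f : Fin n → EuclideanSpace ℝ (Fin d) → ℝ)
    (hdiff : ∀ i, Differentiable ℝ (f i)) (x : EuclideanSpace ℝ (Fin d)) :
    gradient (fun x => (1 / (n : ℝ)) * ∑ i, f i x) x
      = (1 / (n : ℝ)) • ∑ i, gradient (f i) x := by
  apply HasGradientAt.gradient
  rw [hasGradientAt_iff_hasFDerivAt]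
  have h : HasFDerivAt (fun x => ∑ i, f i x) (∑ i, fderiv ℝ (f i) x) x :=
    HasFDerivAt.fun_sum fun i _ => (hdiff i x).hasFDerivAt
  have h' := h.const_mul (1 / (n : ℝ))
  have heq : (InnerProductSpace.toDual ℝ (EuclideanSpace ℝ (Fin d)))
      ((1 / (n : ℝ)) • ∑ i, gradient (f i) x) = (1 / (n : ℝ)) • ∑ i, fderiv ℝ (f i) x := by
    rw [map_smulₛₗ, map_sum]
    simp [gradient]
  rw [heq]
  exact h'


/-- Mini-batch SARAH variance recursion with batch size `b` and i.i.d. uniform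
sampling with replacement (average over all `b`-tuples): the expected squared
error of the estimator is at most `‖g − ∇f(x)‖² + (L̃²/b)‖y − x‖²`. -/
theorem sarah_variance_recursion_minibatch {d n b : ℕ} (hn : 1 ≤ n) (hb : 1 ≤ b)
    (f : Fin n → EuclideanSpace ℝ (Fin d) → ℝ) (L : Fin n → ℝ)
    (hL : ∀ i, 0 ≤ L i)
    (hdiff : ∀ i, Differentiable ℝ (f i))
    (hlip : ∀ i, ∀ u v, ‖gradient (f i) u - gradient (f i) v‖ ≤ L i * ‖u - v‖)
    (F : EuclideanSpace ℝ (Fin d) → ℝ)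
    (hF : F = fun x => (1 / (n : ℝ)) * ∑ i, f i x)
    (Lt2 : ℝ) (hLt2 : Lt2 = (1 / (n : ℝ)) * ∑ i, (L i) ^ 2)
    (x y g : EuclideanSpace ℝ (Fin d)) :
    (1 / (n : ℝ) ^ b) * ∑ σ : Fin b → Fin n,
        ‖g + (1 / (b : ℝ)) • (∑ l, (gradient (f (σ l)) y - gradient (f (σ l)) x))
          - gradient F y‖ ^ 2
      ≤ ‖g - gradient F x‖ ^ 2 + (Lt2 / b) * ‖y - x‖ ^ 2 := by

  have hn0 : (n : ℝ) ≠ 0 := by positivity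
  have hb0 : (b : ℝ) ≠ 0 := by positivity
  have hG : ∀ z, gradient F z = (1 / (n : ℝ)) • ∑ i, gradient (f i) z := by
    intro z; rw [hF]; exact gradient_avg_aux f hdiff z
  set D : Fin n → EuclideanSpace ℝ (Fin d) := fun i => gradient (f i) y - gradient (f i) x with hD
  set m := gradient F y - gradient F x with hm
  have hsumD : ∑ i, D i = (n : ℝ) • m := by
    rw [hm, hG, hG, ← smul_sub, smul_smul, hD, Finset.sum_sub_distrib]
    simp [hn0]
  set W : ℝ := ∑ i, ‖D i - m‖ ^ 2 with hW
  have hWle : W ≤ n * Lt2 * ‖y - x‖ ^ 2 := by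
    have h1 : W = ∑ i, ‖D i‖ ^ 2 - n * ‖m‖ ^ 2 := by
      rw [hW]
      simp_rw [norm_sub_sq_real]
      rw [Finset.sum_add_distrib, Finset.sum_sub_distrib, ← Finset.mul_sum, ← sum_inner, hsumD,
        real_inner_smul_left, real_inner_self_eq_norm_sq]
      simp
      ring
    have h2 : ∑ i, ‖D i‖ ^ 2 ≤ ∑ i, (L i) ^ 2 * ‖y - x‖ ^ 2 := by
      refine Finset.sum_le_sum fun i _ => ?_
      rw [← mul_pow]
      exact pow_le_pow_left₀ (norm_nonneg _) (hlip i y x) 2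
    have h3 : (n : ℝ) * Lt2 = ∑ i, (L i) ^ 2 := by
      rw [hLt2]; field_simp
    rw [h3, Finset.sum_mul, h1]
    have : 0 ≤ (n : ℝ) * ‖m‖ ^ 2 := by positivity
    linarith
  have key := sum_tuple_aux (fun i => (1 / (b : ℝ)) • (D i - m)) (W / (n * b ^ 2))
    (by rw [← Finset.smul_sum, Finset.sum_sub_distrib, hsumD]; simp [← Nat.cast_smul_eq_nsmul ℝ])
    (by
      simp_rw [norm_smul, mul_pow]
      rw [← Finset.mul_sum, ← hW]
      simp
      field_simp) b (g - gradient F x)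
  have hrew : ∀ σ : Fin b → Fin n,
      g + (1 / (b : ℝ)) • (∑ l, (gradient (f (σ l)) y - gradient (f (σ l)) x)) - gradient F y
      = (g - gradient F x) + ∑ l, (1 / (b : ℝ)) • (D (σ l) - m) := by
    intro σ
    change g + (1 / (b : ℝ)) • (∑ l, D (σ l)) - gradient F y = _
    rw [← Finset.smul_sum, Finset.sum_sub_distrib (fun l => D (σ l)), smul_sub]
    have : (1 / (b : ℝ)) • ∑ _l : Fin b, m = m := by
      simp [← Nat.cast_smul_eq_nsmul ℝ, smul_smul, hb0]
    rw [this, hm]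
    abel
  simp_rw [hrew]
  rw [key, ← mul_assoc, one_div_mul_cancel (pow_ne_zero b hn0), one_mul]
  have h5 : (b : ℝ) * (W / (n * b ^ 2)) = W / (n * b) := by field_simp
  rw [h5]
  have h6 : W / (n * b) ≤ Lt2 / b * ‖y - x‖ ^ 2 := by
    rw [div_le_iff₀ (by positivity)]
    calc W ≤ _ := hWle
      _ = _ := by field_simp
  linarith
end

section
/- Let L > 0, L̃ ≥ L, D > 0, p ∈ (0,1), and b ≥ 1. Set α = sqrt(p·b)·L / ( sqrt(1−p)·L̃ ) and M = 2α/(p·L). Let (a_k)_{k≥0} and (v_k)_{k≥0} be sequences of nonnegative reals and (η_k)_{k≥0} a sequence with 0 ≤ η_k ≤ p/2, satisfying for all k: a_{k+1} ≤ (1 − η_k)·a_k + (α/L)·v_k + (L/α)·D²·η_k² + (L/2)·D²·η_k², and v_{k+1} ≤ (1 − p)·v_k + ((1 − p)·L̃²·D²/b)·η_k². Then the Lyapunov sequence Φ_k := a_k + M·v_k satisfies, for all k: Φ_{k+1} ≤ (1 − η_k)·Φ_k + L·D²·η_k²·( 1/2 + 3·(L̃/L)·sqrt( (1−p)/(p·b)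 ) ). -/
/-- Lyapunov combination step in the proof of Theorem 1 (Sarah Frank-Wolfe,
convex case): combining the two expectation recursions into a single
recursion for `Φ_k = a_k + M v_k`. -/
theorem sarah_fw_lyapunov_step (L Lt D p b α M : ℝ)
    (hL : 0 < L) (hLt : L ≤ Lt) (hD : 0 < D)
    (hp : p ∈ Set.Ioo (0 : ℝ) 1) (hb : 1 ≤ b)
    (hα : α = Real.sqrt (p * b) * L / (Real.sqrt (1 - p) * Lt))
    (hM : M = 2 * α / (p * L))
    (a v η : ℕ → ℝ)
    (ha : ∀ k, 0 ≤ a k) (hv : ∀ k, 0 ≤ v k)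
    (hηnn : ∀ k, 0 ≤ η k) (hηle : ∀ k, η k ≤ p / 2)
    (hrec1 : ∀ k, a (k + 1) ≤ (1 - η k) * a k + (α / L) * v k
      + (L / α) * D ^ 2 * η k ^ 2 + (L / 2) * D ^ 2 * η k ^ 2)
    (hrec2 : ∀ k, v (k + 1) ≤ (1 - p) * v k
      + ((1 - p) * Lt ^ 2 * D ^ 2 / b) * η k ^ 2) :
    ∀ k, a (k + 1) + M * v (k + 1) ≤ (1 - η k) * (a k + M * v k)
      + L * D ^ 2 * η k ^ 2
        * (1 / 2 + 3 * (Lt / L) * Real.sqrt ((1 - p) / (p * b))) := by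
  intro k
  obtain ⟨hp0, hp1⟩ := hp
  have hLt0 : 0 < Lt := lt_of_lt_of_le hL hLt
  have hb0 : 0 < b := by linarith
  have hpb : 0 < p * b := mul_pos hp0 hb0
  have hq : 0 < 1 - p := by linarith
  rw [Real.sqrt_div hq.le]
  have hr : 0 < Real.sqrt (p * b) := Real.sqrt_pos.2 hpb
  have hs : 0 < Real.sqrt (1 - p) := Real.sqrt_pos.2 hq
  have hr2 : Real.sqrt (p * b) ^ 2 = p * b := Real.sq_sqrt hpb.le
  have hs2 : Real.sqrt (1 - p) ^ 2 = 1 - p := Real.sq_sqrt hq.le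
  generalize Real.sqrt (p * b) = r at *
  generalize Real.sqrt (1 - p) = s at *
  have hα0 : 0 < α := by rw [hα]; positivity
  have hM0 : 0 < M := by rw [hM]; positivity
  have e1 : α / L = M * (p / 2) := by rw [hM]; field_simp
  have e2 : L / α = s * Lt / r := by rw [hα]; field_simp
  have e3 : M * ((1 - p) * Lt ^ 2 * D ^ 2 / b) = 2 * (s * Lt / r) * D ^ 2 := by
    rw [hM, hα, ← hs2]
    field_simp
    rw [hr2]
  have e4 : L * (3 * (Lt / L) * (s / r)) = 3 * (s * Lt / r) := by field_simp
  have h1 := hrec1 k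
  have h2 := mul_le_mul_of_nonneg_left (hrec2 k) hM0.le
  have h3 : M * v k * η k ≤ M * v k * (p / 2) :=
    mul_le_mul_of_nonneg_left (hηle k) (mul_nonneg hM0.le (hv k))
  rw [e1, e2] at h1
  rw [mul_add, ← mul_assoc M _ (η k ^ 2), e3] at h2
  have e5 : L * D ^ 2 * η k ^ 2 * (1 / 2 + 3 * (Lt / L) * (s / r))
      = L / 2 * D ^ 2 * η k ^ 2 + 3 * (s * Lt / r) * D ^ 2 * η k ^ 2 := by
    rw [← e4]; ring
  rw [e5]
  linarith
end

section
/- Let L > 0, L̃ ≥ L, D > 0, p ∈ (0,1), b ≥ 1, and K ≥ 1 an integer; set α = sqrt(p·b)·L / ( sqrt(1−p)·L̃ ), M = 2α/(p·L), and k₀ = ⌈K/2⌉. Define step sizes η_k for 0 ≤ k < K by: if K ≤ 2/p then η_k = p/2 for all k; if K > 2/p then η_k = p/2 for k < k₀ and η_k = 2/(4/p + k − k₀) for k₀ ≤ k < K. Let (a_k)_{k=0}^K and (v_k)_{k=0}^K be nonnegative reals with v₀ = 0 satisfying, for all 0 ≤ k < K: a_{k+1} ≤ (1 − η_k)·a_k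 + (α/L)·v_k + (L/α)·D²·η_k² + (L/2)·D²·η_k², and v_{k+1} ≤ (1 − p)·v_k + ((1 − p)·L̃²·D²/b)·η_k². Then there is an absolute constant C > 0 (independent of all parameters and sequences) such that a_K ≤ C·( (a₀/p)·exp(−K·p/4) + ( 1 + (L̃/L)·sqrt( (1−p)/(p·b) ) )·L·D²/K ). -/
lemma sfw_phase_one (B q : ℝ) (hB : 0 ≤ B) (hq0 : 0 ≤ q) (hq1 : q ≤ 1) (F : ℕ → ℝ) (N : ℕ)
    (h : ∀ k < N, F (k + 1) ≤ (1 - q) * F k + B * q ^ 2) :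
    ∀ k ≤ N, F k ≤ (1 - q) ^ k * F 0 + B * q := by
  intro k
  induction k with
  | zero => intro _; have := mul_nonneg hB hq0; simp; linarith
  | succ k ih =>
    intro hk
    have h1 := h k (by omega)
    have h2 := mul_le_mul_of_nonneg_left (ih (by omega)) (by linarith : 0 ≤ 1 - q)
    calc F (k + 1) ≤ (1 - q) * ((1 - q) ^ k * F 0 + B * q) + B * q ^ 2 := by linarith
      _ = (1 - q) ^ (k + 1) * F 0 + B * q := by ring

lemma sfw_phase_two (B E w : ℝ) (hB : 0 ≤ B) (hE : 0 ≤ E) (hw : 4 ≤ w) (F : ℕ → ℝ) (N : ℕ)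
    (h0 : F 0 ≤ E + 4 * B / w)
    (h : ∀ j < N, F (j + 1) ≤ (1 - 2 / (w + j)) * F j + B * (2 / (w + j)) ^ 2) :
    ∀ j ≤ N, F j ≤ E + 4 * B / (w + j) := by
  intro j
  induction j with
  | zero => intro _; simpa using h0
  | succ j ih =>
    intro hj
    have h1 := h j (by omega)
    have h3 := ih (by omega)
    push_cast
    have hx : 4 ≤ w + (j : ℝ) := by have : (0 : ℝ) ≤ j := by positivity
                                    linarith
    rw [← add_assoc]
    generalize w + (j : ℝ) = x at *
    have hx0 : 0 < x := by linarith
    have h4 : 0 ≤ 1 - 2 / x := by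
      rw [sub_nonneg, div_le_one hx0]; linarith
    have h2 := mul_le_mul_of_nonneg_left h3 h4
    have h5 : (1 - 2 / x) * E ≤ E := by
      have : 0 ≤ 2 / x * E := by positivity
      linarith
    have h6 : (1 - 2 / x) * (4 * B / x) + B * (2 / x) ^ 2 ≤ 4 * B / (x + 1) := by
      have : 4 * B / (x + 1) - ((1 - 2 / x) * (4 * B / x) + B * (2 / x) ^ 2)
          = 4 * B / (x ^ 2 * (x + 1)) := by
        field_simp; ring
      have h7 : 0 ≤ 4 * B / (x ^ 2 * (x + 1)) := by positivity
      linarith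
    linarith

lemma sfw_exp (p : ℝ) (hp0 : 0 < p) (hp1 : p < 1) (K k : ℕ) (hk : (K : ℝ) / 2 ≤ k) :
    (1 - p / 2) ^ k ≤ Real.exp (-(K : ℝ) * p / 4) := by
  have h1 : 1 - p / 2 ≤ Real.exp (-(p / 2)) := by
    have := Real.add_one_le_exp (-(p / 2)); linarith
  calc (1 - p / 2) ^ k ≤ (Real.exp (-(p / 2))) ^ k :=
        pow_le_pow_left₀ (by linarith) h1 k
    _ = Real.exp (k * (-(p / 2))) := (Real.exp_nat_mul _ _).symm
    _ ≤ _ := by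
      apply Real.exp_le_exp.mpr
      nlinarith

/-- Theorem 1 of the paper (Sarah Frank-Wolfe, convex case) in its
deterministic expectation-sequence form. -/
theorem sarah_fw_convex_rate :
    ∃ C : ℝ, 0 < C ∧
      ∀ (L Lt D p b : ℝ) (K : ℕ) (α M : ℝ) (η a v : ℕ → ℝ),
        0 < L → L ≤ Lt → 0 < D → p ∈ Set.Ioo (0 : ℝ) 1 → 1 ≤ b → 1 ≤ K →
        α = Real.sqrt (p * b) * L / (Real.sqrt (1 - p) * Lt) →
        M = 2 * α / (p * L) →
        (∀ k < K, η k =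
          if (K : ℝ) ≤ 2 / p then p / 2
          else if k < ⌈(K : ℝ) / 2⌉₊ then p / 2
          else 2 / (4 / p + (k : ℝ) - (⌈(K : ℝ) / 2⌉₊ : ℝ))) →
        (∀ k, 0 ≤ a k) → (∀ k, 0 ≤ v k) → v 0 = 0 →
        (∀ k < K, a (k + 1) ≤ (1 - η k) * a k + (α / L) * v k
          + (L / α) * D ^ 2 * η k ^ 2 + (L / 2) * D ^ 2 * η k ^ 2) →
        (∀ k < K, v (k + 1) ≤ (1 - p) * v k
          + ((1 - p) * Lt ^ 2 * D ^ 2 / b) * η k ^ 2) →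
        a K ≤ C * ((a 0 / p) * Real.exp (-(K : ℝ) * p / 4)
          + (1 + (Lt / L) * Real.sqrt ((1 - p) / (p * b))) * L * D ^ 2 / K) := by
  refine ⟨24, by norm_num, ?_⟩
  intro L Lt D p b K α M η a v hL hLt hD hp hb hK hα hM hη ha hv hv0 hra hrv
  obtain ⟨hp0, hp1⟩ := hp
  have hLt0 : 0 < Lt := by linarith
  have hb0 : 0 < b := by linarith
  have hq0 : 0 < 1 - p := by linarith
  have hK0 : (0 : ℝ) < K := by exact_mod_cast hK
  set s := (Lt / L) * Real.sqrt ((1 - p) / (p * b)) with hs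
  have hs0 : 0 < s := by positivity
  have hα0 : 0 < α := by rw [hα]; positivity
  have hαs : α * s = 1 := by
    rw [hα, hs, Real.sqrt_div hq0.le]
    have h1 : 0 < Real.sqrt (1 - p) := Real.sqrt_pos.mpr hq0
    have h2 : 0 < Real.sqrt (p * b) := Real.sqrt_pos.mpr (by positivity)
    field_simp
  have hs2 : s ^ 2 * (L ^ 2 * (p * b)) = Lt ^ 2 * (1 - p) := by
    rw [hs, mul_pow, Real.sq_sqrt (by positivity)]
    field_simp
  have hM0 : 0 < M := by rw [hM]; positivity
  have hMp : α / L = M * (p / 2) := by rw [hM]; field_simp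
  have hLα : L / α = L * s := by
    rw [div_eq_iff hα0.ne']; linear_combination (-L) * hαs
  have hMB : M * ((1 - p) * Lt ^ 2 * D ^ 2 / b) = 2 * L * s * D ^ 2 := by
    have : (1 - p) * Lt ^ 2 * D ^ 2 / b = s ^ 2 * L ^ 2 * p * D ^ 2 := by
      rw [div_eq_iff hb0.ne']; linear_combination (-D ^ 2) * hs2
    rw [this, hM]
    have : 2 * α / (p * L) * (s ^ 2 * L ^ 2 * p * D ^ 2) = 2 * L * s * D ^ 2 * (α * s) := by
      field_simp
    rw [this, hαs, mul_one]
  set G := (1 + s) * L * D ^ 2 with hG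
  have hG0 : 0 < G := by positivity
  obtain ⟨F, hF⟩ : ∃ F : ℕ → ℝ, ∀ k, F k = a k + M * v k := ⟨_, fun _ => rfl⟩
  have hF0 : F 0 = a 0 := by rw [hF, hv0]; ring
  have haF : a K ≤ F K := by
    rw [hF]; have := mul_nonneg hM0.le (hv K); linarith
  have step : ∀ k < K, η k ≤ p / 2 → F (k + 1) ≤ (1 - η k) * F k + (3 * G) * η k ^ 2 := by
    intro k hk hηk
    have h1 := hra k hk
    have h2 := mul_le_mul_of_nonneg_left (hrv k hk) hM0.le
    rw [hMp, hLα] at h1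
    have h3 : M * ((1 - p) * v k + ((1 - p) * Lt ^ 2 * D ^ 2 / b) * η k ^ 2)
        = M * v k * (1 - p) + 2 * L * s * D ^ 2 * η k ^ 2 := by
      rw [← hMB]; ring
    rw [h3] at h2
    have h4 : 0 ≤ M * v k * (p / 2 - η k) :=
      mul_nonneg (mul_nonneg hM0.le (hv k)) (by linarith)
    have h5 : 0 ≤ L * D ^ 2 * η k ^ 2 := by positivity
    rw [hF, hF, hG]
    linarith
  have hpd : 1 ≤ 1 / p := by rw [le_div_iff₀ hp0]; linarith
  have hexp := Real.exp_pos (-(K : ℝ) * p / 4)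
  have hE : a 0 * Real.exp (-(K : ℝ) * p / 4) ≤ (a 0 / p) * Real.exp (-(K : ℝ) * p / 4) := by
    apply mul_le_mul_of_nonneg_right _ hexp.le
    rw [le_div_iff₀ hp0]; nlinarith [ha 0]
  have hE0 : 0 ≤ a 0 * Real.exp (-(K : ℝ) * p / 4) := mul_nonneg (ha 0) hexp.le
  have hGK : 0 < G / K := by positivity
  suffices hfin : F K ≤ a 0 * Real.exp (-(K : ℝ) * p / 4) + 24 * (G / K) by linarith
  by_cases hc : (K : ℝ) ≤ 2 / p
  · have h1 := sfw_phase_one (3 * G) (p / 2) (by positivity) (by positivity) (by linarith) F K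
      (fun k hk => by
        have e : η k = p / 2 := by rw [hη k hk, if_pos hc]
        have := step k hk e.le
        rwa [e] at this) K le_rfl
    have h2 := mul_le_mul_of_nonneg_right (sfw_exp p hp0 hp1 K K (by linarith)) (ha 0)
    have h3 : p / 2 ≤ 1 / K := by
      rw [le_div_iff₀ hp0] at hc
      rw [le_div_iff₀ hK0]; linarith
    have h4 := mul_le_mul_of_nonneg_left h3 hG0.le
    have h5 : G * (1 / K) = G / K := by ring
    rw [hF0] at h1
    linarith
  · set k0 := ⌈(K : ℝ) / 2⌉₊ with hk0
    have hk0l : (K : ℝ) / 2 ≤ k0 := Nat.le_ceil _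
    have hk0K : k0 ≤ K := Nat.ceil_le.mpr (by linarith)
    have hk0u : (k0 : ℝ) < K / 2 + 1 := Nat.ceil_lt_add_one (by positivity)
    have h1 := sfw_phase_one (3 * G) (p / 2) (by positivity) (by positivity) (by linarith) F k0
      (fun k hk => by
        have hkK : k < K := by omega
        have e : η k = p / 2 := by rw [hη k hkK, if_neg hc, if_pos hk]
        have := step k hkK e.le
        rwa [e] at this) k0 le_rfl
    have h2 := mul_le_mul_of_nonneg_right (sfw_exp p hp0 hp1 K k0 hk0l) (ha 0)
    rw [hF0] at h1
    have hw : 4 ≤ 4 / p := by rw [le_div_iff₀ hp0]; linarith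
    have h3 := sfw_phase_two (3 * G) (a 0 * Real.exp (-(K : ℝ) * p / 4)) (4 / p) (by positivity)
      hE0 hw (fun j => F (k0 + j)) (K - k0)
      (by
        have : 4 * (3 * G) / (4 / p) = 3 * G * p := by field_simp
        rw [this]
        have := mul_pos hG0 hp0
        simp only [add_zero]
        linarith)
      (fun j hj => by
        have hkK : k0 + j < K := by omega
        have e : η (k0 + j) = 2 / (4 / p + j) := by
          rw [hη _ hkK, if_neg hc, if_neg (by omega)]
          push_cast
          congr 1; ring
        have hj0 : (0 : ℝ) ≤ j := by positivity
        have hle : η (k0 + j) ≤ p / 2 := by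
          rw [e, div_le_iff₀ (by linarith)]
          have : p / 2 * (4 / p + j) = 2 + p / 2 * j := by field_simp; ring
          rw [this]
          have : 0 ≤ p / 2 * j := by positivity
          linarith
        have := step _ hkK hle
        rw [e] at this
        exact this) (K - k0) le_rfl
    rw [Nat.add_sub_cancel' hk0K, Nat.cast_sub hk0K] at h3
    have h4 : 4 * (3 * G) / (4 / p + ((K : ℝ) - k0)) ≤ 4 * (3 * G) / (K / 2) := by
      apply div_le_div_of_nonneg_left (by positivity) (by positivity) (by linarith)
    have h5 : 4 * (3 * G) / ((K : ℝ) / 2) = 24 * (G / K) := by field_simp; ring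
    linarith
end

section
/- Let L > 0, L̃ ≥ L, D > 0, p ∈ (0,1), b ≥ 1, and K ≥ 1 an integer; set α = (L/L̃)·sqrt( p·b/(1−p) ), M = α/(p·L), and η = 1/sqrt(K). Let (a_k)_{k=0}^K, (v_k)_{k=0}^K, (G_k)_{k=0}^{K−1} be nonnegative reals with v₀ = 0 satisfying, for all 0 ≤ k < K, the two inequalities η·G_k ≤ a_k − a_{k+1} + (α/L)·v_k + (L/α)·D²·η² + (L/2)·D²·η² and v_{k+1} ≤ (1 − p)·v_k + ((1 − p)·L̃²·D²/b)·η². Then min_{0 ≤ k < K} G_k ≤ (1/K)·Σ_{k=0}^{K−1} G_k ≤ a₀/sqrt(K) + ( 1/2 + 2·(L̃/L)·sqrt( (1−p)/(p·b) ) )·L·D²/sqrt(K). -/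
/-- Theorem 2 of the paper (Sarah Frank-Wolfe, non-convex case) in its
deterministic expectation-sequence form, with constant step size `η = 1/√K`. -/
theorem sarah_fw_nonconvex_rate (L Lt D p b : ℝ) (K : ℕ)
    (hL : 0 < L) (hLt : L ≤ Lt) (hD : 0 < D)
    (hp : p ∈ Set.Ioo (0 : ℝ) 1) (hb : 1 ≤ b) (hK : 1 ≤ K)
    (α M η : ℝ)
    (hα : α = (L / Lt) * Real.sqrt (p * b / (1 - p)))
    (hM : M = α / (p * L))
    (hη : η = 1 / Real.sqrt K)
    (a v G : ℕ → ℝ)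
    (ha : ∀ k, 0 ≤ a k) (hv : ∀ k, 0 ≤ v k) (hG : ∀ k, 0 ≤ G k)
    (hv0 : v 0 = 0)
    (hrec1 : ∀ k < K, η * G k ≤ a k - a (k + 1) + (α / L) * v k
      + (L / α) * D ^ 2 * η ^ 2 + (L / 2) * D ^ 2 * η ^ 2)
    (hrec2 : ∀ k < K, v (k + 1) ≤ (1 - p) * v k
      + ((1 - p) * Lt ^ 2 * D ^ 2 / b) * η ^ 2) :
    Finset.inf' (Finset.range K)
        (Finset.nonempty_range_iff.mpr (Nat.one_le_iff_ne_zero.mp hK)) G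
      ≤ (1 / (K : ℝ)) * ∑ k ∈ Finset.range K, G k ∧
    (1 / (K : ℝ)) * ∑ k ∈ Finset.range K, G k
      ≤ a 0 / Real.sqrt K
        + (1 / 2 + 2 * (Lt / L) * Real.sqrt ((1 - p) / (p * b)))
          * L * D ^ 2 / Real.sqrt K := by
  obtain ⟨hp0, hp1⟩ := hp
  have hq : 0 < 1 - p := by linarith
  have hb0 : 0 < b := by linarith
  have hLt0 : 0 < Lt := by linarith
  have hK0 : (0 : ℝ) < K := by exact_mod_cast hK
  have hsK : 0 < Real.sqrt K := Real.sqrt_pos.mpr hK0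
  have hη0 : 0 < η := by rw [hη]; positivity
  have hηK : η ^ 2 * K = 1 := by
    rw [hη, div_pow, Real.sq_sqrt hK0.le]; field_simp
  constructor
  · have h := Finset.card_nsmul_le_sum (Finset.range K) G
      (Finset.inf' (Finset.range K)
        (Finset.nonempty_range_iff.mpr (Nat.one_le_iff_ne_zero.mp hK)) G)
      (fun x hx => Finset.inf'_le G hx)
    rw [Finset.card_range, nsmul_eq_mul] at h
    rw [one_div, inv_mul_eq_div, le_div_iff₀ hK0]
    linarith
  · obtain ⟨s, hs⟩ : ∃ s, s = Real.sqrt ((1 - p) / (p * b)) := ⟨_, rfl⟩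
    have hs0 : 0 < s := by rw [hs]; apply Real.sqrt_pos.mpr; positivity
    have hs2 : s ^ 2 = (1 - p) / (p * b) := by
      rw [hs]; apply Real.sq_sqrt; positivity
    have hinv : Real.sqrt (p * b / (1 - p)) = s⁻¹ := by
      rw [hs, ← Real.sqrt_inv, inv_div]
    rw [hinv] at hα
    rw [← hs]
    have hα0 : 0 < α := by rw [hα]; positivity
    have hM0 : 0 < M := by rw [hM]; positivity
    have h1 : L / α = Lt * s := by rw [hα]; field_simp
    have h2 : α / L = M * p := by rw [hM]; field_simp
    have h3 : M * ((1 - p) * Lt ^ 2 * D ^ 2 / b) = Lt * s * D ^ 2 := by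
      have h4 : (1 - p) = s ^ 2 * (p * b) := by rw [hs2]; field_simp
      rw [hM, hα, h4]; field_simp
    have key : ∀ n ≤ K, η * ∑ k ∈ Finset.range n, G k
        ≤ a 0 - a n - M * v n + n * ((2 * Lt * s + L / 2) * D ^ 2 * η ^ 2) := by
      intro n
      induction n with
      | zero => intro _; simp [hv0]
      | succ n ih =>
        intro hn
        have i1 := ih (by omega)
        have i2 := hrec1 n (by omega)
        have i3 := mul_le_mul_of_nonneg_left (hrec2 n (by omega)) hM0.le
        rw [mul_add, ← mul_assoc M (_ / b), h3] at i3
        rw [h1, h2] at i2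
        rw [Finset.sum_range_succ, mul_add]
        push_cast
        linarith
    have hk := key K le_rfl
    have e : (K : ℝ) * ((2 * Lt * s + L / 2) * D ^ 2 * η ^ 2)
        = (2 * Lt * s + L / 2) * D ^ 2 := by
      linear_combination ((2 * Lt * s + L / 2) * D ^ 2) * hηK
    have hk2 : η * ∑ k ∈ Finset.range K, G k
        ≤ a 0 + (2 * Lt * s + L / 2) * D ^ 2 := by
      have := ha K
      have := mul_nonneg hM0.le (hv K)
      linarith
    have hk3 := mul_le_mul_of_nonneg_left hk2 hη0.le
    have e1 : 1 / (K : ℝ) = η * η := by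
      rw [div_eq_iff hK0.ne']; linarith
    have e2 : a 0 / Real.sqrt K + (1 / 2 + 2 * (Lt / L) * s) * L * D ^ 2 / Real.sqrt K
        = η * (a 0 + (2 * Lt * s + L / 2) * D ^ 2) := by
      rw [hη]; field_simp; ring
    rw [e1, e2, mul_assoc]
    exact hk3
end

section
/- Let L > 0, L̃ ≥ L, D > 0, n ≥ 1, and 1 ≤ b ≤ n. Set λ = b/(2n), α = b·L/(5·L̃·sqrt(n)), M₁ = 2α/(λ·L), and M₂ = 8·M₁·λ²·n/b². Let (a_k)_{k≥0}, (v_k)_{k≥0}, (w_k)_{k≥0} be sequences of nonnegative reals and (η_k)_{k≥0} a sequence with 0 ≤ η_k ≤ b/(4n), satisfying for all k: a_{k+1} ≤ (1 − η_k)·a_k + (α/L)·v_k + (L/α)·D²·η_k² + (L/2)·D²·η_k²; v_{k+1} ≤ (1 − λ)·v_k + (2·L̃²·D²/b)·η_k² + (2·λ²/b)·w_k; and w_{k+1} ≤ (1 − b/(2n))·w_k + (2·n·L̃²·D²/b)·η_k². Then the Lyapunov sequence Φ_k := a_k + M₁·v_k + M₂·w_k satisfies, for all k: Φ_{k+1}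 ≤ (1 − η_k)·Φ_k + L·D²·η_k²·( 1/2 + 10·L̃·sqrt(n)/(L·b) ). -/
/-- Lyapunov combination step in the proof of Theorem 3 (Saga Sarah Frank-Wolfe,
convex case): combining the three expectation recursions into a single
recursion for `Φ_k = a_k + M₁ v_k + M₂ w_k`. -/
theorem saga_sarah_fw_lyapunov_step (L Lt D n b lam α M₁ M₂ : ℝ)
    (hL : 0 < L) (hLt : L ≤ Lt) (hD : 0 < D)
    (hn : 1 ≤ n) (hb1 : 1 ≤ b) (hbn : b ≤ n)
    (hlam : lam = b / (2 * n))
    (hα : α = b * L / (5 * Lt * Real.sqrt n))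
    (hM₁ : M₁ = 2 * α / (lam * L))
    (hM₂ : M₂ = 8 * M₁ * lam ^ 2 * n / b ^ 2)
    (a v w η : ℕ → ℝ)
    (ha : ∀ k, 0 ≤ a k) (hv : ∀ k, 0 ≤ v k) (hw : ∀ k, 0 ≤ w k)
    (hηnn : ∀ k, 0 ≤ η k) (hηle : ∀ k, η k ≤ b / (4 * n))
    (hrec1 : ∀ k, a (k + 1) ≤ (1 - η k) * a k + (α / L) * v k
      + (L / α) * D ^ 2 * η k ^ 2 + (L / 2) * D ^ 2 * η k ^ 2)
    (hrec2 : ∀ k, v (k + 1) ≤ (1 - lam) * v k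
      + (2 * Lt ^ 2 * D ^ 2 / b) * η k ^ 2 + (2 * lam ^ 2 / b) * w k)
    (hrec3 : ∀ k, w (k + 1) ≤ (1 - b / (2 * n)) * w k
      + (2 * n * Lt ^ 2 * D ^ 2 / b) * η k ^ 2) :
    ∀ k, a (k + 1) + M₁ * v (k + 1) + M₂ * w (k + 1)
      ≤ (1 - η k) * (a k + M₁ * v k + M₂ * w k)
        + L * D ^ 2 * η k ^ 2 * (1 / 2 + 10 * Lt * Real.sqrt n / (L * b)) := by
  intro k
  have hs : 0 < Real.sqrt n := Real.sqrt_pos.mpr (by linarith)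
  have hsn : n = Real.sqrt n ^ 2 := (Real.sq_sqrt (by linarith)).symm
  have hle := hηle k
  have hr1 := hrec1 k
  have hr2 := hrec2 k
  have hr3 := hrec3 k
  have hvk := hv k
  have hwk := hw k
  have hLt0 : 0 < Lt := by linarith
  have hb0 : 0 < b := by linarith
  generalize Real.sqrt n = s at *
  subst hsn
  have e1 : α / L = b / (5 * Lt * s) := by rw [hα]; field_simp
  have e2 : L / α = 5 * Lt * s / b := by rw [hα]; field_simp
  have e3 : M₁ = 4 * s / (5 * Lt) := by rw [hM₁, hα, hlam]; field_simp; norm_num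
  have e4 : M₂ = 8 / (5 * Lt * s) := by rw [hM₂, e3, hlam]; field_simp; norm_num
  have p1 : 0 < M₁ := by rw [e3]; positivity
  have p2 : 0 < M₂ := by rw [e4]; positivity
  have c1 : α / L = M₁ * (2 * (b / (4 * s ^ 2))) / 2 := by
    rw [e1, e3]; field_simp
  have c1' : lam = 2 * (b / (4 * s ^ 2)) := by rw [hlam]; field_simp; norm_num
  have c2 : M₁ * (2 * lam ^ 2 / b) = M₂ * (b / (4 * s ^ 2)) := by
    rw [e3, e4, hlam]; field_simp; norm_num
  have c2' : b / (2 * s ^ 2) = 2 * (b / (4 * s ^ 2)) := by field_simp; norm_num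
  have c3 : L / α + M₁ * (2 * Lt ^ 2 / b) + M₂ * (2 * s ^ 2 * Lt ^ 2 / b)
      = 49 / 5 * (Lt * s / b) := by
    rw [e2, e3, e4]; field_simp; norm_num
  have c4 : L * (10 * Lt * s / (L * b)) = 10 * (Lt * s / b) := by field_simp
  have hQ : 0 < Lt * s / b := by positivity
  have hE : 0 ≤ D ^ 2 * η k ^ 2 := by positivity
  have q2 := mul_le_mul_of_nonneg_left hr2 p1.le
  have q3 := mul_le_mul_of_nonneg_left hr3 p2.le
  have m1 := mul_nonneg (mul_nonneg p1.le hvk) (sub_nonneg.mpr hle)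
  have m2 := mul_nonneg (mul_nonneg p2.le hwk) (sub_nonneg.mpr hle)
  have m3 := mul_nonneg hE hQ.le
  rw [c2'] at q3
  have q2' : M₁ * v (k + 1) ≤ M₁ * (1 - 2 * (b / (4 * s ^ 2))) * v k
      + M₁ * (2 * Lt ^ 2 / b) * (D ^ 2 * η k ^ 2) + M₂ * (b / (4 * s ^ 2)) * w k := by
    rw [← c2, ← c1']
    refine q2.trans (le_of_eq ?_)
    ring
  have q3' : M₂ * w (k + 1) ≤ M₂ * (1 - 2 * (b / (4 * s ^ 2))) * w k
      + M₂ * (2 * s ^ 2 * Lt ^ 2 / b) * (D ^ 2 * η k ^ 2) := by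
    refine q3.trans (le_of_eq ?_)
    ring
  rw [c1] at hr1
  have c3' := congrArg (fun x => x * (D ^ 2 * η k ^ 2)) c3
  have c4' := congrArg (fun x => x * (D ^ 2 * η k ^ 2)) c4
  beta_reduce at c3' c4'
  clear hrec1 hrec2 hrec3 hηle hα hM₁ hM₂ hlam e1 e2 e3 e4 c1 c2 c2' c3 c4 q2 q3 hr2 hr3
  generalize L / α = A at *
  generalize b / (4 * s ^ 2) = B at *
  generalize Lt * s / b = Q at *
  generalize M₁ * (2 * Lt ^ 2 / b) = X at *
  generalize M₂ * (2 * s ^ 2 * Lt ^ 2 / b) = Y at *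
  generalize 10 * Lt * s / (L * b) = Z at *
  linarith
end

section
/- Let L > 0, L̃ ≥ L, D > 0, n ≥ 1, 1 ≤ b ≤ n, and K ≥ 1 an integer; set λ = b/(2n), α = b·L/(5·L̃·sqrt(n)), M₁ = 2α/(λ·L), M₂ = 8·M₁·λ²·n/b², and k₀ = ⌈K/2⌉. Define step sizes η_k for 0 ≤ k < K by: if K ≤ 4n/b then η_k = b/(4n) for all k; if K > 4n/b then η_k = b/(4n) for k < k₀ and η_k = 2/(8n/b + k − k₀) for k₀ ≤ k < K. Let (a_k)_{k=0}^K, (v_k)_{k=0}^K, (w_k)_{k=0}^K be nonnegative reals with v₀ = w₀ = 0, satisfying for all 0 ≤ k < K: a_{k+1} ≤ (1 − η_k)·a_k + (α/L)·v_k + (L/α)·D²·η_k² + (L/2)·D²·η_k²; v_{k+1} ≤ (1 − λ)·v_k + (2·L̃²·D²/b)·η_k² + (2·λ²/b)·w_k; and w_{k+1} ≤ (1 − b/(2n))·w_k + (2·n·L̃²·D²/b)·η_k². Then there is an absolute constant C > 0 (independent of all parameters and sequences) such that a_K ≤ C·( (n/b)·a₀·exp(−b·K/(8n)) + ( 1 +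 L̃·sqrt(n)/(L·b) )·L·D²/K ). -/
lemma phase_const (P : ℕ → ℝ) (R e : ℝ) (m : ℕ) (he : 0 ≤ e) (he1 : e ≤ 1) (hR : 0 ≤ R)
    (h0 : 0 ≤ P 0)
    (h : ∀ k < m, P (k + 1) ≤ (1 - e) * P k + R * e ^ 2) :
    P m ≤ P 0 * Real.exp (-(e * m)) + R * e := by
  have key : ∀ k ≤ m, P k ≤ P 0 * (1 - e) ^ k + R * e := by
    intro k
    induction k with
    | zero =>
      intro _
      have := mul_nonneg hR he
      simp only [pow_zero, mul_one]
      linarith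
    | succ k ih =>
      intro hk
      have h1 := ih (by omega)
      have h2 := h k (by omega)
      have h3 := mul_le_mul_of_nonneg_left h1 (sub_nonneg.mpr he1)
      calc P (k + 1) ≤ (1 - e) * P k + R * e ^ 2 := h2
        _ ≤ (1 - e) * (P 0 * (1 - e) ^ k + R * e) + R * e ^ 2 := by linarith
        _ = _ := by ring
  have h1 := key m le_rfl
  have h2 : (1 - e) ^ m ≤ Real.exp (-(e * m)) := by
    have h3 : 1 - e ≤ Real.exp (-e) := Real.one_sub_le_exp_neg e
    calc (1 - e) ^ m ≤ (Real.exp (-e)) ^ m := pow_le_pow_left₀ (by linarith) h3 m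
      _ = _ := by rw [← Real.exp_nat_mul]; congr 1; ring
  have h3 := mul_le_mul_of_nonneg_left h2 h0
  linarith

lemma phase_dec (P : ℕ → ℝ) (R s : ℝ) (m : ℕ) (hs : 8 ≤ s) (hR : 0 ≤ R)
    (h : ∀ j < m, P (j + 1) ≤ (1 - 2 / (s + j)) * P j + R * (2 / (s + j)) ^ 2)
    (hP : ∀ j, 0 ≤ P j) :
    (s + m) ^ 2 * P m ≤ s ^ 2 * P 0 + 6 * R * m := by
  induction m with
  | zero => simp
  | succ m ih =>
    have h1 := ih (fun j hj => h j (by omega))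
    have h2 := h m (by omega)
    push_cast
    have hm : (0 : ℝ) ≤ m := Nat.cast_nonneg m
    obtain ⟨t, ht⟩ : ∃ t : ℝ, t = s + m := ⟨_, rfl⟩
    have ht8 : 8 ≤ t := by linarith
    rw [← ht] at h1 h2
    rw [← add_assoc, ← ht]
    have ht0 : 0 < t := by linarith
    have h3 : (t + 1) ^ 2 * (1 - 2 / t) ≤ t ^ 2 := by
      have : (t + 1) ^ 2 * (1 - 2 / t) = t ^ 2 - (3 * t + 2) / t := by
        field_simp
        ring
      have h5 : 0 ≤ (3 * t + 2) / t := by positivity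
      linarith
    have h4 : (t + 1) ^ 2 * (2 / t) ^ 2 ≤ 6 := by
      rw [div_pow, ← mul_div_assoc, div_le_iff₀ (by positivity)]
      nlinarith
    calc (t + 1) ^ 2 * P (m + 1)
        ≤ (t + 1) ^ 2 * ((1 - 2 / t) * P m + R * (2 / t) ^ 2) :=
          mul_le_mul_of_nonneg_left h2 (by positivity)
      _ = ((t + 1) ^ 2 * (1 - 2 / t)) * P m + R * ((t + 1) ^ 2 * (2 / t) ^ 2) := by ring
      _ ≤ t ^ 2 * P m + R * 6 :=
          add_le_add (mul_le_mul_of_nonneg_right h3 (hP m)) (mul_le_mul_of_nonneg_left h4 hR)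
      _ ≤ _ := by linarith

/-- The rate for the Lyapunov sequence. -/
lemma rate (P η : ℕ → ℝ) (R q : ℝ) (K : ℕ) (hq : 1 ≤ q) (hR : 0 ≤ R) (hK : 1 ≤ K)
    (hP : ∀ k, 0 ≤ P k)
    (hη : ∀ k < K, η k = if (K : ℝ) ≤ 4 * q then 1 / (4 * q)
          else if k < ⌈(K : ℝ) / 2⌉₊ then 1 / (4 * q)
          else 2 / (8 * q + (k : ℝ) - (⌈(K : ℝ) / 2⌉₊ : ℝ)))
    (h : ∀ k < K, P (k + 1) ≤ (1 - η k) * P k + R * η k ^ 2) :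
    P K ≤ P 0 * Real.exp (-(K / (8 * q))) + 16 * R / K := by
  have hq0 : 0 < q := by linarith
  have hK0 : (0 : ℝ) < K := by exact_mod_cast hK
  have he0 : 0 ≤ 1 / (4 * q) := by positivity
  have he1 : 1 / (4 * q) ≤ 1 := by
    rw [div_le_one (by positivity)]; linarith
  by_cases hc : (K : ℝ) ≤ 4 * q
  · have h1 := phase_const P R (1 / (4 * q)) K he0 he1 hR (hP 0) (by
      intro k hk
      have := h k hk
      rw [hη k hk, if_pos hc] at this
      exact this)
    have h2 : Real.exp (-(1 / (4 * q) * K)) ≤ Real.exp (-(K / (8 * q))) := by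
      apply Real.exp_le_exp.mpr
      have : 1 / (4 * q) * K = 2 * (K / (8 * q)) := by field_simp; ring
      have h5 : 0 ≤ K / (8 * q) := by positivity
      linarith
    have h3 := mul_le_mul_of_nonneg_left h2 (hP 0)
    have h4 : R * (1 / (4 * q)) ≤ 16 * R / K := by
      rw [mul_one_div]
      calc R / (4 * q) ≤ R / K := div_le_div_of_nonneg_left hR hK0 hc
        _ ≤ 16 * R / K := by gcongr; linarith
    linarith
  · obtain ⟨k0, hk0⟩ : ∃ k0 : ℕ, k0 = ⌈(K : ℝ) / 2⌉₊ := ⟨_, rfl⟩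
    rw [← hk0] at hη
    have hl : (K : ℝ) / 2 ≤ k0 := by rw [hk0]; exact Nat.le_ceil _
    have hu : (k0 : ℝ) < K / 2 + 1 := by rw [hk0]; exact Nat.ceil_lt_add_one (by positivity)
    have hkK : k0 ≤ K := by
      rw [hk0]; apply Nat.ceil_le.mpr; linarith
    have h1 := phase_const P R (1 / (4 * q)) k0 he0 he1 hR (hP 0) (by
      intro k hk
      have := h k (by omega)
      rw [hη k (by omega), if_neg hc, if_pos hk] at this
      exact this)
    have h2 : Real.exp (-(1 / (4 * q) * k0)) ≤ Real.exp (-(K / (8 * q))) := by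
      apply Real.exp_le_exp.mpr
      have : (K / (8 * q)) = 1 / (4 * q) * (K / 2) := by field_simp; ring
      have h5 := mul_le_mul_of_nonneg_left hl he0
      linarith
    have h3 := mul_le_mul_of_nonneg_left h2 (hP 0)
    obtain ⟨m, hm⟩ := Nat.exists_eq_add_of_le hkK
    have h4 := phase_dec (fun j => P (k0 + j)) R (8 * q) m (by linarith) hR (by
      intro j hj
      have := h (k0 + j) (by omega)
      rw [hη (k0 + j) (by omega), if_neg hc, if_neg (by omega)] at this
      have e : 8 * q + ((k0 + j : ℕ) : ℝ) - k0 = 8 * q + j := by push_cast; ring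
      rw [e] at this
      exact this) (fun j => hP _)
    simp only [add_zero] at h4
    rw [← hm] at h4
    have hmK : (K : ℝ) = k0 + m := by rw [hm]; push_cast; ring
    have hm0 : (0 : ℝ) ≤ m := Nat.cast_nonneg m
    obtain ⟨t, ht⟩ : ∃ t : ℝ, t = 8 * q + m := ⟨_, rfl⟩
    rw [← ht] at h4
    have ht1 : (K : ℝ) ≤ 2 * t := by linarith
    have ht0 : 0 < t := by linarith
    obtain ⟨A, hA⟩ : ∃ A, A = P 0 * Real.exp (-(K / (8 * q))) := ⟨_, rfl⟩
    have hA0 : 0 ≤ A := by rw [hA]; exact mul_nonneg (hP 0) (Real.exp_pos _).le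
    rw [← hA] at h3 ⊢
    have h5 : P k0 ≤ A + R * (1 / (4 * q)) := by linarith
    have h6 : t ^ 2 * P K ≤ t ^ 2 * A + 8 * R * t := by
      have e : (8 * q) ^ 2 * (A + R * (1 / (4 * q))) = (8 * q) ^ 2 * A + 16 * q * R := by
        field_simp; ring
      have h7 := mul_le_mul_of_nonneg_left h5 (sq_nonneg (8 * q))
      have h8 : (8 * q) ^ 2 * A ≤ t ^ 2 * A := by
        apply mul_le_mul_of_nonneg_right _ hA0
        apply pow_le_pow_left₀ (by positivity); linarith
      have h9 : 16 * q * R + 6 * R * m ≤ 8 * R * t := by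
        rw [ht]; nlinarith [mul_nonneg hR hm0, mul_nonneg hR hq0.le]
      linarith
    have h7 : P K ≤ A + 8 * R / t := by
      have e : t ^ 2 * A + 8 * R * t = t ^ 2 * (A + 8 * R / t) := by field_simp
      rw [e] at h6
      exact le_of_mul_le_mul_left h6 (by positivity)
    have h8 : 8 * R / t ≤ 16 * R / K := by
      rw [div_le_div_iff₀ ht0 hK0]
      nlinarith
    linarith

/-- Theorem 3 of the paper (Saga Sarah Frank-Wolfe, convex case) in its
deterministic expectation-sequence form. -/
theorem saga_sarah_fw_convex_rate :
    ∃ C : ℝ, 0 < C ∧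
      ∀ (L Lt D n b : ℝ) (K : ℕ) (lam α M₁ M₂ : ℝ) (η a v w : ℕ → ℝ),
        0 < L → L ≤ Lt → 0 < D → 1 ≤ n → 1 ≤ b → b ≤ n → 1 ≤ K →
        lam = b / (2 * n) →
        α = b * L / (5 * Lt * Real.sqrt n) →
        M₁ = 2 * α / (lam * L) →
        M₂ = 8 * M₁ * lam ^ 2 * n / b ^ 2 →
        (∀ k < K, η k =
          if (K : ℝ) ≤ 4 * n / b then b / (4 * n)
          else if k < ⌈(K : ℝ) / 2⌉₊ then b / (4 * n)
          else 2 / (8 * n / b + (k : ℝ) - (⌈(K : ℝ) / 2⌉₊ : ℝ))) →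
        (∀ k, 0 ≤ a k) → (∀ k, 0 ≤ v k) → (∀ k, 0 ≤ w k) →
        v 0 = 0 → w 0 = 0 →
        (∀ k < K, a (k + 1) ≤ (1 - η k) * a k + (α / L) * v k
          + (L / α) * D ^ 2 * η k ^ 2 + (L / 2) * D ^ 2 * η k ^ 2) →
        (∀ k < K, v (k + 1) ≤ (1 - lam) * v k
          + (2 * Lt ^ 2 * D ^ 2 / b) * η k ^ 2 + (2 * lam ^ 2 / b) * w k) →
        (∀ k < K, w (k + 1) ≤ (1 - b / (2 * n)) * w k
          + (2 * n * Lt ^ 2 * D ^ 2 / b) * η k ^ 2) →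
        a K ≤ C * ((n / b) * a 0 * Real.exp (-b * (K : ℝ) / (8 * n))
          + (1 + Lt * Real.sqrt n / (L * b)) * L * D ^ 2 / K) := by
  refine ⟨160, by norm_num, ?_⟩
  intro L Lt D n b K lam α M₁ M₂ η a v w hL hLt hD hn hb hbn hK hlam hα hM₁ hM₂ hη ha hv hw
    hv0 hw0 h1 h2 h3
  have hn0 : 0 < n := by linarith
  have hb0 : 0 < b := by linarith
  have hLt0 : 0 < Lt := by linarith
  have hK0 : (0 : ℝ) < K := by exact_mod_cast hK
  obtain ⟨r, hr⟩ : ∃ r, r = Real.sqrt n := ⟨_, rfl⟩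
  have hr0 : 0 < r := by rw [hr]; exact Real.sqrt_pos.mpr hn0
  have hrn : n = r ^ 2 := by rw [hr]; exact (Real.sq_sqrt hn0.le).symm
  rw [← hr] at hα ⊢
  have hlam0 : 0 < lam := by rw [hlam]; positivity
  have hα0 : 0 < α := by rw [hα]; positivity
  have hM₁0 : 0 < M₁ := by rw [hM₁]; positivity
  have hM₂0 : 0 < M₂ := by rw [hM₂]; positivity
  have hq : 1 ≤ n / b := by rw [le_div_iff₀ hb0]; linarith
  have e1 : 1 / (4 * (n / b)) = b / (4 * n) := by field_simp
  obtain ⟨R, hR⟩ : ∃ R, R = (L / 2 + 49 / 5 * (Lt * r / b)) * D ^ 2 := ⟨_, rfl⟩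
  have hR0 : 0 ≤ R := by rw [hR]; positivity
  have e4 : 4 * n / b = 4 * (n / b) := by ring
  have e8 : 8 * n / b = 8 * (n / b) := by ring
  have hηle : ∀ k < K, η k ≤ lam / 2 := by
    intro k hk
    have el : lam / 2 = b / (4 * n) := by rw [hlam]; field_simp; ring
    rw [hη k hk, el]
    split_ifs with c1 c2
    · exact le_rfl
    · exact le_rfl
    · have c3 : ((⌈(K : ℝ) / 2⌉₊ : ℕ) : ℝ) ≤ k := by exact_mod_cast not_lt.mp c2
      have c4 : b / (4 * n) = 2 / (8 * n / b) := by field_simp; norm_num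
      rw [c4]
      apply div_le_div_of_nonneg_left (by norm_num) (by positivity)
      linarith
  have i1 : M₁ * lam = 2 * (α / L) := by rw [hM₁]; field_simp
  have i2 : M₂ * lam / 2 = M₁ * (2 * lam ^ 2 / b) := by rw [hM₂, hlam]; field_simp; ring
  have i3 : (L / α) * D ^ 2 + (L / 2) * D ^ 2 + M₁ * (2 * Lt ^ 2 * D ^ 2 / b)
      + M₂ * (2 * n * Lt ^ 2 * D ^ 2 / b) = R := by
    rw [hR, hM₂, hM₁, hlam, hα, hrn]; field_simp; ring
  have hfin := rate (fun k => a k + M₁ * v k + M₂ * w k) η R (n / b) K hq hR0 hK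
    (by
      intro k
      have := ha k
      have := mul_nonneg hM₁0.le (hv k)
      have := mul_nonneg hM₂0.le (hw k)
      show 0 ≤ a k + M₁ * v k + M₂ * w k
      linarith)
    (by
      intro k hk
      rw [hη k hk, e1, e4, e8])
    (by
      intro k hk
      show a (k + 1) + M₁ * v (k + 1) + M₂ * w (k + 1)
        ≤ (1 - η k) * (a k + M₁ * v k + M₂ * w k) + R * η k ^ 2
      have g1 := h1 k hk
      have g2 := mul_le_mul_of_nonneg_left (h2 k hk) hM₁0.le
      have g3 := mul_le_mul_of_nonneg_left (h3 k hk) hM₂0.le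
      rw [← hlam] at g3
      have g4 := mul_nonneg (sub_nonneg.mpr (hηle k hk)) (mul_nonneg hM₁0.le (hv k))
      have g5 := mul_nonneg (sub_nonneg.mpr (hηle k hk)) (mul_nonneg hM₂0.le (hw k))
      have j1 := congrArg (fun x => x * v k) i1
      have j2 := congrArg (fun x => x * w k) i2
      have j3 := congrArg (fun x => x * η k ^ 2) i3
      linarith)
  simp only [hv0, hw0, mul_zero, add_zero] at hfin
  have hexp : -((K : ℝ) / (8 * (n / b))) = -b * (K : ℝ) / (8 * n) := by field_simp
  rw [hexp] at hfin
  have f1 : a K ≤ a K + M₁ * v K + M₂ * w K := by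
    have := mul_nonneg hM₁0.le (hv K)
    have := mul_nonneg hM₂0.le (hw K)
    linarith
  obtain ⟨E, hE⟩ : ∃ E, E = a 0 * Real.exp (-b * (K : ℝ) / (8 * n)) := ⟨_, rfl⟩
  have hE0 : 0 ≤ E := by rw [hE]; exact mul_nonneg (ha 0) (Real.exp_pos _).le
  rw [mul_assoc (n / b), ← hE]
  rw [← hE] at hfin
  have f2 : E ≤ 160 * (n / b * E) := by nlinarith
  have f3 : 16 * R / K ≤ 160 * ((1 + Lt * r / (L * b)) * L * D ^ 2 / K) := by
    rw [← mul_div_assoc]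
    apply div_le_div_of_nonneg_right _ hK0.le
    have e : (1 + Lt * r / (L * b)) * L * D ^ 2 = (L + Lt * r / b) * D ^ 2 := by field_simp
    rw [e, hR]
    have p1 : 0 ≤ L * D ^ 2 := by positivity
    have p2 : 0 ≤ Lt * r / b * D ^ 2 := by positivity
    linarith
  linarith
end

section
/- Let L > 0, L̃ ≥ L, D > 0, n ≥ 1, 1 ≤ b ≤ n, and K ≥ 1 an integer; set λ = b/(2n), α = b·L/(3·L̃·sqrt(n)), M₁ = α/(λ·L), M₂ = 4·M₁·λ²·n/b², and η = 1/sqrt(K). Let (a_k)_{k=0}^K, (v_k)_{k=0}^K, (w_k)_{k=0}^K, (G_k)_{k=0}^{K−1} be nonnegative reals with v₀ = w₀ = 0, satisfying for all 0 ≤ k < K the three inequalities: η·G_k ≤ a_k − a_{k+1} + (α/L)·v_k + (L/α)·D²·η² + (L/2)·D²·η²; v_{k+1} ≤ (1 − λ)·v_k + (2·L̃²·D²/b)·η² + (2·λ²/b)·w_k; and w_{k+1} ≤ (1 − b/(2n))·w_k + (2·n·L̃²·D²/b)·η². Then min_{0 ≤ k < K} G_k ≤ (1/K)·Σ_{k=0}^{K−1}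 G_k ≤ a₀/sqrt(K) + ( 1/2 + 6·L̃·sqrt(n)/(L·b) )·L·D²/sqrt(K). -/
/-- Theorem 4 of the paper (Saga Sarah Frank-Wolfe, non-convex case) in its
deterministic expectation-sequence form, with constant step size `η = 1/√K`. -/
theorem saga_sarah_fw_nonconvex_rate (L Lt D n b : ℝ) (K : ℕ)
    (hL : 0 < L) (hLt : L ≤ Lt) (hD : 0 < D)
    (hn : 1 ≤ n) (hb1 : 1 ≤ b) (hbn : b ≤ n) (hK : 1 ≤ K)
    (lam α M₁ M₂ η : ℝ)
    (hlam : lam = b / (2 * n))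
    (hα : α = b * L / (3 * Lt * Real.sqrt n))
    (hM₁ : M₁ = α / (lam * L))
    (hM₂ : M₂ = 4 * M₁ * lam ^ 2 * n / b ^ 2)
    (hη : η = 1 / Real.sqrt K)
    (a v w G : ℕ → ℝ)
    (ha : ∀ k, 0 ≤ a k) (hv : ∀ k, 0 ≤ v k) (hw : ∀ k, 0 ≤ w k)
    (hG : ∀ k, 0 ≤ G k) (hv0 : v 0 = 0) (hw0 : w 0 = 0)
    (hrec1 : ∀ k < K, η * G k ≤ a k - a (k + 1) + (α / L) * v k
      + (L / α) * D ^ 2 * η ^ 2 + (L / 2) * D ^ 2 * η ^ 2)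
    (hrec2 : ∀ k < K, v (k + 1) ≤ (1 - lam) * v k
      + (2 * Lt ^ 2 * D ^ 2 / b) * η ^ 2 + (2 * lam ^ 2 / b) * w k)
    (hrec3 : ∀ k < K, w (k + 1) ≤ (1 - b / (2 * n)) * w k
      + (2 * n * Lt ^ 2 * D ^ 2 / b) * η ^ 2) :
    Finset.inf' (Finset.range K)
        (Finset.nonempty_range_iff.mpr (Nat.one_le_iff_ne_zero.mp hK)) G
      ≤ (1 / (K : ℝ)) * ∑ k ∈ Finset.range K, G k ∧
    (1 / (K : ℝ)) * ∑ k ∈ Finset.range K, G k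
      ≤ a 0 / Real.sqrt K
        + (1 / 2 + 6 * Lt * Real.sqrt n / (L * b)) * L * D ^ 2 / Real.sqrt K := by
  have hs : 0 < Real.sqrt n := Real.sqrt_pos.mpr (by linarith)
  have hss : Real.sqrt n ^ 2 = n := Real.sq_sqrt (by linarith)
  have hKr : (0 : ℝ) < K := by exact_mod_cast hK
  have hq : 0 < Real.sqrt K := Real.sqrt_pos.mpr hKr
  have hqq : Real.sqrt K ^ 2 = K := Real.sq_sqrt hKr.le
  have hLt0 : 0 < Lt := by linarith
  have hb : 0 < b := by linarith
  have hn0 : 0 < n := by linarith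
  constructor
  · rw [one_div, inv_mul_eq_div, le_div_iff₀ hKr]
    have h := Finset.card_nsmul_le_sum (Finset.range K) G
      (Finset.inf' (Finset.range K)
        (Finset.nonempty_range_iff.mpr (Nat.one_le_iff_ne_zero.mp hK)) G)
      (fun x hx => Finset.inf'_le G hx)
    rw [Finset.card_range, nsmul_eq_mul] at h
    linarith
  · generalize hsd : Real.sqrt n = s at *
    generalize hqd : Real.sqrt K = q at *
    subst hss
    have hM₁' : M₁ = 2 * s / (3 * Lt) := by
      rw [hM₁, hα, hlam]; field_simp
    have hM₂' : M₂ = M₁ / s ^ 2 := by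
      rw [hM₂, hlam]; field_simp; ring
    have hM₁0 : 0 < M₁ := by rw [hM₁']; positivity
    have hM₂0 : 0 < M₂ := by rw [hM₂']; positivity
    have e1 : M₁ * lam = α / L := by
      rw [hM₁', hα, hlam]; field_simp
    have e2 : M₂ * (b / (2 * s ^ 2)) = M₁ * (2 * lam ^ 2 / b) := by
      rw [hM₂', hlam]; field_simp
    have e3 : M₁ * (2 * Lt ^ 2 * D ^ 2 / b) = 4 / 3 * (Lt * s / b * D ^ 2) := by
      rw [hM₁']; field_simp; norm_num
    have e4 : M₂ * (2 * s ^ 2 * Lt ^ 2 * D ^ 2 / b) = 4 / 3 * (Lt * s / b * D ^ 2) := by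
      rw [hM₂', hM₁']; field_simp; norm_num
    have e5 : L / α * D ^ 2 = 3 * (Lt * s / b * D ^ 2) := by
      rw [hα]; field_simp
    have hT : 0 < Lt * s / b * D ^ 2 := by positivity
    have hTη : 0 ≤ Lt * s / b * D ^ 2 * η ^ 2 := by positivity
    have e6 : (1 / 2 + 6 * Lt * s / (L * b)) * L * D ^ 2
        = 6 * (Lt * s / b * D ^ 2) + L / 2 * D ^ 2 := by field_simp; ring
    rw [e6]
    generalize Lt * s / b * D ^ 2 = T at *
    have key : ∀ m : ℕ, m ≤ K → η * ∑ k ∈ Finset.range m, G k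
        ≤ a 0 - (a m + M₁ * v m + M₂ * w m) + m * ((6 * T + L / 2 * D ^ 2) * η ^ 2) := by
      intro m
      induction m with
      | zero => intro _; simp [hv0, hw0]
      | succ m ih =>
        intro hm
        have i := ih (by omega)
        have h1 := hrec1 m (by omega)
        have h2 := mul_le_mul_of_nonneg_left (hrec2 m (by omega)) hM₁0.le
        have h3 := mul_le_mul_of_nonneg_left (hrec3 m (by omega)) hM₂0.le
        have h2' : M₁ * ((1 - lam) * v m + (2 * Lt ^ 2 * D ^ 2 / b) * η ^ 2
            + (2 * lam ^ 2 / b) * w m)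
            = M₁ * v m - α / L * v m + 4 / 3 * T * η ^ 2
              + M₁ * (2 * lam ^ 2 / b) * w m := by
          rw [← e1, ← e3]; ring
        have h3' : M₂ * ((1 - b / (2 * s ^ 2)) * w m
            + (2 * s ^ 2 * Lt ^ 2 * D ^ 2 / b) * η ^ 2)
            = M₂ * w m - M₁ * (2 * lam ^ 2 / b) * w m + 4 / 3 * T * η ^ 2 := by
          rw [← e2, ← e4]; ring
        rw [h2'] at h2
        rw [h3'] at h3
        rw [e5] at h1
        rw [Finset.sum_range_succ]
        push_cast
        linarith
    have h := key K le_rfl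
    have p1 := mul_nonneg hM₁0.le (hv K)
    have p2 := mul_nonneg hM₂0.le (hw K)
    have p3 := ha K
    have e7 : (K : ℝ) * ((6 * T + L / 2 * D ^ 2) * η ^ 2) = 6 * T + L / 2 * D ^ 2 := by
      rw [hη, ← hqq]; field_simp
    rw [e7] at h
    have e8 : (1 / (K : ℝ)) * ∑ k ∈ Finset.range K, G k
        = (η * ∑ k ∈ Finset.range K, G k) / q := by
      rw [hη]
      generalize ∑ k ∈ Finset.range K, G k = S
      rw [← hqq]; field_simp
    rw [e8, ← add_div]
    apply div_le_div_of_nonneg_right _ hq.le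
    linarith
end
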